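/- arXiv:0906.2696 — 2 statements merged into one kernel-verified Lean document; each statement's English description precedes it below -/
import Mathlib

section
/- Among the 63 projective lines of the E7 root system there are exactly 135 unordered 7-tuples of mutually orthogonal lines. -/
/-- The projective line (ray) spanned by a vector in `ℝ⁸`. -/
def ray8 (v : Fin 8 → ℝ) : Submodule ℝ (Fin 8 → ℝ) := Submodule.span ℝ {v}

/-- Orthogonality of subspaces of `ℝ⁸` with respect to the standard inner product. -/
def Perp8 (L M : Submodule ℝ (Fin 8 → ℝ)) : Prop :=
  ∀ x ∈ L, ∀ y ∈ M, ∑ i, x i * y i = 0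

/-- The `E7` root system, modeled in the hyperplane `{Σ aᵢ = 0} ⊂ ℝ⁸` as the union
of the `S₈`-orbits of `(1,−1,0,0,0,0,0,0)` and `(1/2)(1,1,1,1,−1,−1,−1,−1)`. -/
def E7roots : Set (Fin 8 → ℝ) :=
  {v | ∃ σ : Equiv.Perm (Fin 8),
    v = ![1, -1, 0, 0, 0, 0, 0, 0] ∘ σ ∨
    v = ((1 : ℝ) / 2) • (![1, 1, 1, 1, -1, -1, -1, -1] ∘ σ)}

/-- The 63 projective lines of the `E7` configuration. -/
def E7lines : Set (Submodule ℝ (Fin 8 → ℝ)) := ray8 '' E7roots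

namespace E7aux

/-- Bit masks of the 63 nonempty even subsets of `{0,…,6}`. -/
def idx : List ℕ :=
  [3, 5, 6, 9, 10, 12, 15, 17, 18, 20, 23, 24, 27, 29, 30, 33, 34, 36, 39, 40, 43, 45, 46, 48, 51, 53, 54, 57, 58, 60, 63, 65, 66, 68, 71, 72, 75, 77, 78, 80, 83, 85, 86, 89, 90, 92, 95, 96, 99, 101, 102, 105, 106, 108, 111, 113, 114, 116, 119, 120, 123, 125, 126]

/-- The masks meet in an even number of elements. -/
def adj (a b : ℕ) : Bool :=
  Nat.beq ((27030 >>> (((a &&& b) ^^^ ((a &&& b) >>> 4)) &&& 15)) &&& 1) 0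

/-- One step of the recursion counting cliques. -/
def cntStep (F : List ℕ → ℕ) : List ℕ → ℕ
  | [] => 0
  | a :: l => F (l.filter (adj a)) + cntStep F l

/-- Number of pairwise adjacent `k`-subsets of a list. -/
def cnt : ℕ → List ℕ → ℕ
  | 0 => fun _ => 1
  | k + 1 => cntStep (cnt k)

theorem cnt_idx : cnt 7 idx = 135 := by decide +kernel

def bt (m : ℕ) (i : Fin 8) : Bool := Nat.testBit m i.val

def pc (m : ℕ) : ℕ :=
  (bt m 0).toNat + (bt m 1).toNat + (bt m 2).toNat + (bt m 3).toNat + (bt m 4).toNat + (bt m 5).toNat + (bt m 6).toNat + (bt m 7).toNat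

/-- Root vector for a mask of size 2. -/
def w2 (m : ℕ) (i : Fin 8) : ℤ :=
  if bt m i then (if m % 2 ^ i.val = 0 then 1 else -1) else 0

/-- (Scaled) root attached to an even mask. -/
def w (m : ℕ) (i : Fin 8) : ℤ :=
  if pc m = 4 then (if bt m i then 1 else -1)
  else if pc m = 6 then w2 (255 - m) i else w2 m i

def dot (x y : Fin 8 → ℤ) : ℤ :=
  x 0 * y 0 + x 1 * y 1 + x 2 * y 2 + x 3 * y 3 + x 4 * y 4 + x 5 * y 5 + x 6 * y 6 + x 7 * y 7

def key (x : ℤ) : ℕ := if x = 1 then 0 else if x = -1 then 1 else 2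

def rk (x : Fin 8 → ℤ) (i : Fin 8) : Fin 8 :=
  Fin.ofNat 8 (∑ j : Fin 8, if key (x j) < key (x i) ∨ (key (x j) = key (x i) ∧ j < i) then 1 else 0)

def b1 : Fin 8 → ℤ := ![1, -1, 0, 0, 0, 0, 0, 0]
def b2 : Fin 8 → ℤ := ![1, 1, 1, 1, -1, -1, -1, -1]

theorem adj_dot : ∀ a ∈ idx, ∀ b ∈ idx, a ≠ b → (adj a b = true ↔ dot (w a) (w b) = 0) := by
  decide +kernel

theorem cs_ne : ∀ a ∈ idx, ∀ b ∈ idx, a ≠ b →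
    dot (w a) (w b) ^ 2 ≠ dot (w a) (w a) * dot (w b) (w b) := by
  decide +kernel

theorem w_orbit : ∀ a ∈ idx, (∀ i j, rk (w a) i = rk (w a) j → i = j) ∧
    ((∀ i, w a i = b1 (rk (w a) i)) ∨ (∀ i, w a i = b2 (rk (w a) i))) := by
  decide +kernel

theorem cover1 : ∀ i j : Fin 8, i ≠ j → ∃ a ∈ idx,
    (∀ k, w a k = (if k = i then 1 else if k = j then -1 else 0)) ∨
    (∀ k, w a k = -(if k = i then 1 else if k = j then -1 else 0)) := by
  decide +kernel

theorem cover2_nat : ∀ m < 256, pc m = 4 → ∃ a ∈ idx,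
    (∀ k, w a k = (if bt m k then 1 else -1)) ∨
    (∀ k, w a k = -(if bt m k then 1 else -1)) := by
  decide +kernel

theorem bools : ∀ x0 x1 x2 x3 x4 x5 x6 x7 : Bool,
    (x0.toNat + 2 * x1.toNat + 4 * x2.toNat + 8 * x3.toNat + 16 * x4.toNat + 32 * x5.toNat
      + 64 * x6.toNat + 128 * x7.toNat) < 256 ∧
    ∀ k, bt (x0.toNat + 2 * x1.toNat + 4 * x2.toNat + 8 * x3.toNat + 16 * x4.toNat + 32 * x5.toNat
      + 64 * x6.toNat + 128 * x7.toNat) k = ![x0, x1, x2, x3, x4, x5, x6, x7] k := by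
  decide +kernel

theorem exists_mask (g : Fin 8 → Bool) : ∃ m < 256, ∀ k, bt m k = g k := by
  obtain ⟨h1, h2⟩ := bools (g 0) (g 1) (g 2) (g 3) (g 4) (g 5) (g 6) (g 7)
  refine ⟨_, h1, fun k => (h2 k).trans ?_⟩
  fin_cases k <;> rfl

end E7aux

namespace E7aux

theorem adj_comm (a b : ℕ) : adj a b = adj b a := by
  unfold adj; rw [Nat.land_comm a b]

/-- The pairwise adjacent `k`-subsets of a finite set. -/
def cliques (k : ℕ) (s : Finset ℕ) : Finset (Finset ℕ) :=
  open Classical in (s.powersetCard k).filter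
    (fun S => (S : Set ℕ).Pairwise (fun a b => adj a b = true))

theorem mem_cliques {k : ℕ} {s S : Finset ℕ} : S ∈ cliques k s ↔
    S ⊆ s ∧ S.card = k ∧ (S : Set ℕ).Pairwise (fun a b => adj a b = true) := by
  simp [cliques, Finset.mem_powersetCard, and_assoc]

theorem cliques_insert (k a : ℕ) (l : List ℕ) (ha : a ∉ l) :
    cliques (k + 1) (a :: l).toFinset =
      (cliques k (l.filter (adj a)).toFinset).image (insert a) ∪ cliques (k + 1) l.toFinset := by
  ext S
  simp only [Finset.mem_union, Finset.mem_image, mem_cliques]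
  constructor
  · rintro ⟨h1, h2, h3⟩
    by_cases haS : a ∈ S
    · left
      refine ⟨S.erase a, ⟨?_, ?_, ?_⟩, Finset.insert_erase haS⟩
      · intro x hx
        obtain ⟨hxa, hxS⟩ := Finset.mem_erase.1 hx
        have := h1 hxS
        have h4 := h3 haS hxS (Ne.symm hxa)
        simp_all
      · rw [Finset.card_erase_of_mem haS, h2]; rfl
      · exact h3.mono (by simp)
    · right
      refine ⟨fun x hx => ?_, h2, h3⟩
      have := h1 hx
      have hxa : x ≠ a := by rintro rfl; exact haS hx
      simp_all
  · rintro (⟨T, ⟨h1, h2, h3⟩, rfl⟩ | ⟨h1, h2, h3⟩)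
    · have haT : a ∉ T := fun h => ha (by have := h1 h; simp at this; exact this.1)
      refine ⟨?_, ?_, ?_⟩
      · intro x hx
        rcases Finset.mem_insert.1 hx with rfl | hx
        · simp
        · have := h1 hx
          simp_all
      · rw [Finset.card_insert_of_notMem haT, h2]
      · rw [Finset.coe_insert]
        refine (Set.pairwise_insert).2 ⟨h3, fun b hb _ => ?_⟩
        have := h1 hb
        have h5 : adj a b = true := by simp at this; exact this.2
        exact ⟨h5, by rw [adj_comm]; exact h5⟩
    · exact ⟨h1.trans (by simp), h2, h3⟩

theorem card_cliques (k : ℕ) : ∀ l : List ℕ, l.Nodup →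
    (cliques k l.toFinset).card = cnt k l := by
  induction k with
  | zero =>
    intro l _
    have : cliques 0 l.toFinset = {∅} := by
      ext S
      rw [mem_cliques, Finset.mem_singleton, Finset.card_eq_zero]
      constructor
      · exact fun h => h.2.1
      · rintro rfl; simp
    rw [this]; rfl
  | succ k ih =>
    intro l hl
    induction l with
    | nil =>
      have : cliques (k + 1) ([] : List ℕ).toFinset = ∅ := by
        ext S
        rw [mem_cliques]
        simp only [Finset.notMem_empty, iff_false]
        rintro ⟨h1, h2, _⟩
        have := Finset.card_le_card h1
        simp at this
        simp [this] at h2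
      rw [this]; rfl
    | cons a l ihl =>
      obtain ⟨ha, hl'⟩ := List.nodup_cons.1 hl
      rw [cliques_insert k a l ha, Finset.card_union_of_disjoint, ihl hl',
        Finset.card_image_of_injOn, ih _ (hl'.filter _)]
      · rfl
      · intro S hS T hT h
        have aux : ∀ S ∈ cliques k (l.filter (adj a)).toFinset, a ∉ S := by
          intro S hS h
          have := (mem_cliques.1 hS).1 h
          simp at this
          exact ha this.1
        rw [← Finset.erase_insert (aux S hS), ← Finset.erase_insert (aux T hT)]
        exact congrArg (fun X => Finset.erase X a) h
      · rw [Finset.disjoint_left]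
        intro S hS hS'
        obtain ⟨T, _, rfl⟩ := Finset.mem_image.1 hS
        have := (mem_cliques.1 hS').1 (Finset.mem_insert_self a T)
        exact ha (by simpa using this)

/-- Real version of the root attached to a mask. -/
def wr (a : ℕ) : Fin 8 → ℝ := fun i => (w a i : ℝ)

def line (a : ℕ) : Submodule ℝ (Fin 8 → ℝ) := ray8 (wr a)

theorem wr_dot (a b : ℕ) : ∑ i, wr a i * wr b i = (dot (w a) (w b) : ℝ) := by
  simp [Fin.sum_univ_eight, wr, dot]

theorem perp_iff (u v : Fin 8 → ℝ) : Perp8 (ray8 u) (ray8 v) ↔ ∑ i, u i * v i = 0 := by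
  constructor
  · intro h
    exact h u (Submodule.mem_span_singleton_self u) v (Submodule.mem_span_singleton_self v)
  · intro h x hx y hy
    obtain ⟨c, rfl⟩ := Submodule.mem_span_singleton.1 hx
    obtain ⟨d, rfl⟩ := Submodule.mem_span_singleton.1 hy
    have : ∑ i, (c • u) i * (d • v) i = c * d * ∑ i, u i * v i := by
      rw [Finset.mul_sum]
      refine Finset.sum_congr rfl fun i _ => ?_
      simp only [Pi.smul_apply, smul_eq_mul]; ring
    rw [this, h, mul_zero]

theorem perp_line {a b : ℕ} (ha : a ∈ idx) (hb : b ∈ idx) (hab : a ≠ b) :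
    Perp8 (line a) (line b) ↔ adj a b = true := by
  rw [line, line, perp_iff, wr_dot, adj_dot a ha b hb hab]
  exact Int.cast_eq_zero

theorem line_inj {a b : ℕ} (ha : a ∈ idx) (hb : b ∈ idx) (h : line a = line b) : a = b := by
  by_contra hab
  apply cs_ne a ha b hb hab
  have : wr a ∈ line b := h ▸ Submodule.mem_span_singleton_self _
  obtain ⟨c, hc⟩ := Submodule.mem_span_singleton.1 this
  have key : (∑ i, wr a i * wr b i) ^ 2 = (∑ i, wr a i * wr a i) * ∑ i, wr b i * wr b i := by
    have h1 : ∑ i, wr a i * wr b i = c * ∑ i, wr b i * wr b i := by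
      rw [← hc, Finset.mul_sum]
      refine Finset.sum_congr rfl fun i _ => ?_
      simp only [Pi.smul_apply, smul_eq_mul]; ring
    have h2 : ∑ i, wr a i * wr a i = c * c * ∑ i, wr b i * wr b i := by
      rw [← hc, Finset.mul_sum]
      refine Finset.sum_congr rfl fun i _ => ?_
      simp only [Pi.smul_apply, smul_eq_mul]; ring
    rw [h1, h2]; ring
  rw [wr_dot, wr_dot, wr_dot] at key
  exact_mod_cast key

theorem ray_smul (c : ℝ) (hc : c ≠ 0) (v : Fin 8 → ℝ) : ray8 (c • v) = ray8 v :=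
  Submodule.span_singleton_smul_eq (IsUnit.mk0 c hc) v

theorem ray_neg (v : Fin 8 → ℝ) : ray8 (-v) = ray8 v := by
  have := ray_smul (-1) (by norm_num) v
  rwa [neg_one_smul] at this

theorem b1_cast (k : Fin 8) :
    (![1, -1, 0, 0, 0, 0, 0, 0] : Fin 8 → ℝ) k = (b1 k : ℝ) := by
  fin_cases k <;> simp [b1]

theorem b2_cast (k : Fin 8) :
    (![1, 1, 1, 1, -1, -1, -1, -1] : Fin 8 → ℝ) k = (b2 k : ℝ) := by
  fin_cases k <;> simp [b2]

theorem b1_eq : ∀ k, b1 k = if k = 0 then 1 else if k = 1 then -1 else 0 := by decide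

theorem b2_eq : ∀ k, b2 k = if decide (k.val < 4) = true then 1 else -1 := by decide

theorem line_of_vec {a : ℕ} {f : Fin 8 → ℤ} (h : (∀ k, w a k = f k) ∨ (∀ k, w a k = -f k)) :
    line a = ray8 (fun k => (f k : ℝ)) := by
  rcases h with h | h
  · have e : wr a = fun k => (f k : ℝ) := by funext k; rw [wr, h k]
    rw [line, e]
  · have e : wr a = -fun k => (f k : ℝ) := by
      funext k
      rw [wr, h k, Int.cast_neg]; rfl
    rw [line, e, ray_neg]

theorem lines_eq : line '' {a | a ∈ idx} = E7lines := by
  ext L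
  constructor
  · rintro ⟨a, ha, rfl⟩
    obtain ⟨hinj, h⟩ := w_orbit a ha
    let σ : Equiv.Perm (Fin 8) := Equiv.ofBijective (rk (w a))
      (Finite.injective_iff_bijective.1 fun i j => hinj i j)
    have hσ : ∀ i, σ i = rk (w a) i := fun i => rfl
    rcases h with h | h
    · refine ⟨wr a, ⟨σ, Or.inl ?_⟩, rfl⟩
      funext i
      rw [Function.comp_apply, b1_cast, hσ, ← h i]; rfl
    · refine ⟨((1 : ℝ) / 2) • wr a, ⟨σ, Or.inr ?_⟩, ray_smul _ (by norm_num) _⟩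
      congr 1
      funext i
      rw [Function.comp_apply, b2_cast, hσ, ← h i]; rfl
  · rintro ⟨v, ⟨σ, rfl | rfl⟩, rfl⟩
    · obtain ⟨a, ha, h⟩ := cover1 (σ.symm 0) (σ.symm 1) (by simp)
      refine ⟨a, ha, ?_⟩
      rw [line_of_vec h]
      congr 1
      funext k
      rw [Function.comp_apply, b1_cast, b1_eq]
      simp only [Equiv.eq_symm_apply]
    · obtain ⟨m, hm, hg⟩ := exists_mask (fun k => decide ((σ k).val < 4))
      have hpc : pc m = 4 := by
        have h1 : pc m = ∑ k, (decide ((σ k).val < 4)).toNat := by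
          rw [Fin.sum_univ_eight]; simp only [pc, hg]
        rw [h1, Equiv.sum_comp σ (fun k : Fin 8 => (decide (k.val < 4)).toNat)]
        decide
      obtain ⟨a, ha, h⟩ := cover2_nat m hm hpc
      refine ⟨a, ha, ?_⟩
      rw [line_of_vec h, ray_smul _ (by norm_num)]
      congr 1
      funext k
      rw [Function.comp_apply, b2_cast, b2_eq, hg]

theorem sets_eq : {S : Set (Submodule ℝ (Fin 8 → ℝ)) |
      S ⊆ E7lines ∧ S.ncard = 7 ∧ S.Pairwise Perp8} =
    (fun T : Finset ℕ => line '' (T : Set ℕ)) '' (cliques 7 idx.toFinset : Set (Finset ℕ)) := by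
  have hinj : Set.InjOn line {a | a ∈ idx} := fun a ha b hb h => line_inj ha hb h
  ext S
  simp only [Set.mem_ofPred_eq, Set.mem_image, Finset.mem_coe, mem_cliques]
  constructor
  · rintro ⟨h1, h2, h3⟩
    classical
    let T : Finset ℕ := idx.toFinset.filter (fun a => line a ∈ S)
    have hT : ∀ a, a ∈ T ↔ a ∈ idx ∧ line a ∈ S := by simp [T]
    have hTi : (T : Set ℕ) ⊆ {a | a ∈ idx} := fun a ha => ((hT a).1 ha).1
    have hTS : line '' (T : Set ℕ) = S := by
      ext L
      constructor
      · rintro ⟨a, ha, rfl⟩; exact ((hT a).1 ha).2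
      · intro hL
        have := h1 hL
        rw [← lines_eq] at this
        obtain ⟨a, ha, rfl⟩ := this
        exact ⟨a, (hT a).2 ⟨ha, hL⟩, rfl⟩
    refine ⟨T, ⟨Finset.filter_subset _ _, ?_, ?_⟩, hTS⟩
    · rw [← hTS, Set.InjOn.ncard_image (hinj.mono hTi), Set.ncard_coe_finset] at h2
      exact h2
    · intro a ha b hb hab
      have ha' := (hT a).1 ha
      have hb' := (hT b).1 hb
      exact (perp_line ha'.1 hb'.1 hab).1
        (h3 ha'.2 hb'.2 fun h => hab (line_inj ha'.1 hb'.1 h))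
  · rintro ⟨T, ⟨h1, h2, h3⟩, rfl⟩
    have hTi : (T : Set ℕ) ⊆ {a | a ∈ idx} := fun a ha => List.mem_toFinset.1 (h1 ha)
    refine ⟨?_, ?_, ?_⟩
    · rw [← lines_eq]; exact Set.image_mono hTi
    · rw [Set.InjOn.ncard_image (hinj.mono hTi), Set.ncard_coe_finset, h2]
    · rintro _ ⟨a, ha, rfl⟩ _ ⟨b, hb, rfl⟩ hab
      have hab' : a ≠ b := fun h => hab (by rw [h])
      exact (perp_line (hTi ha) (hTi hb) hab').2 (h3 ha hb hab')

theorem image_inj : Set.InjOn (fun T : Finset ℕ => line '' (T : Set ℕ))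
    (cliques 7 idx.toFinset : Set (Finset ℕ)) := by
  have hinj : Set.InjOn line {a | a ∈ idx} := fun a ha b hb h => line_inj ha hb h
  intro S hS T hT h
  have hS' := (mem_cliques.1 (Finset.mem_coe.1 hS)).1
  have hT' := (mem_cliques.1 (Finset.mem_coe.1 hT)).1
  apply Finset.coe_injective
  exact (hinj.image_eq_image_iff (fun a ha => List.mem_toFinset.1 (hS' ha))
    (fun a ha => List.mem_toFinset.1 (hT' ha))).1 h

end E7aux

/-- among the 63 projective lines of the `E7` root system there are
exactly 135 unordered 7-tuples of mutually orthogonal lines. -/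
theorem stmt_5 :
    {S : Set (Submodule ℝ (Fin 8 → ℝ)) |
      S ⊆ E7lines ∧ S.ncard = 7 ∧ S.Pairwise Perp8}.ncard = 135 := by
  rw [E7aux.sets_eq, Set.InjOn.ncard_image E7aux.image_inj, Set.ncard_coe_finset,
    E7aux.card_cliques 7 E7aux.idx (by decide +kernel), E7aux.cnt_idx]
end

section
/- In the E7 configuration of 63 projective lines, there exist 7-tuples of mutually non-orthogonal lines, but there are no 8-tuples of mutually non-orthogonal lines. -/
/-- Integral description of a root: `v = a - k/2` with `∑ a = 4k`, and norm two. -/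
lemma root_form {v : Fin 8 → ℝ} (hv : v ∈ E7roots) :
    (∃ (a : Fin 8 → ℤ) (k : ℤ), (∀ i, v i = a i - k / 2) ∧ ∑ i, a i = 4 * k) ∧
      ∑ i, v i * v i = 2 := by
  obtain ⟨σ, rfl | rfl⟩ := hv
  · refine ⟨⟨![1, -1, 0, 0, 0, 0, 0, 0] ∘ σ, 0, ?_, ?_⟩, ?_⟩
    · intro i
      simp only [Function.comp]
      generalize σ i = j
      fin_cases j <;> simp
    · simp only [Function.comp]
      rw [Equiv.sum_comp σ (![1, -1, 0, 0, 0, 0, 0, 0] : Fin 8 → ℤ)]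
      decide
    · simp only [Function.comp]
      rw [Equiv.sum_comp σ (fun j => (![1, -1, 0, 0, 0, 0, 0, 0] : Fin 8 → ℝ) j *
        (![1, -1, 0, 0, 0, 0, 0, 0] : Fin 8 → ℝ) j)]
      simp [Fin.sum_univ_eight]
      norm_num
  · refine ⟨⟨![1, 1, 1, 1, 0, 0, 0, 0] ∘ σ, 1, ?_, ?_⟩, ?_⟩
    · intro i
      simp only [Function.comp, Pi.smul_apply]
      generalize σ i = j
      fin_cases j <;> norm_num
    · simp only [Function.comp]
      rw [Equiv.sum_comp σ (![1, 1, 1, 1, 0, 0, 0, 0] : Fin 8 → ℤ)]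
      decide
    · simp only [Function.comp, Pi.smul_apply]
      rw [Equiv.sum_comp σ (fun j =>
        ((1 : ℝ) / 2) • (![1, 1, 1, 1, -1, -1, -1, -1] : Fin 8 → ℝ) j *
        ((1 : ℝ) / 2) • (![1, 1, 1, 1, -1, -1, -1, -1] : Fin 8 → ℝ) j)]
      simp [Fin.sum_univ_eight]
      norm_num

lemma root_sum {v : Fin 8 → ℝ} (hv : v ∈ E7roots) : ∑ i, v i = 0 := by
  obtain ⟨⟨a, k, h, hs⟩, -⟩ := root_form hv
  have hs' : ∑ i, (a i : ℝ) = 4 * k := by exact_mod_cast hs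
  simp only [h, Finset.sum_sub_distrib, hs']
  simp
  ring

lemma root_inner_int {v w : Fin 8 → ℝ} (hv : v ∈ E7roots) (hw : w ∈ E7roots) :
    ∃ n : ℤ, ∑ i, v i * w i = n := by
  obtain ⟨⟨a, k, h, hs⟩, -⟩ := root_form hv
  obtain ⟨⟨b, l, h', hs'⟩, -⟩ := root_form hw
  have e1 : ∑ i, (a i : ℝ) = 4 * k := by exact_mod_cast hs
  have e2 : ∑ i, (b i : ℝ) = 4 * l := by exact_mod_cast hs'
  refine ⟨∑ i, a i * b i - 2 * k * l, ?_⟩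
  push_cast
  simp only [h, h']
  simp only [Fin.sum_univ_eight] at *
  linear_combination (-(l : ℝ) / 2) * e1 + (-(k : ℝ) / 2) * e2

lemma perp_iff (v w : Fin 8 → ℝ) : Perp8 (ray8 v) (ray8 w) ↔ ∑ i, v i * w i = 0 := by
  constructor
  · intro h
    exact h v (Submodule.mem_span_singleton_self v) w (Submodule.mem_span_singleton_self w)
  · intro h x hx y hy
    obtain ⟨c, rfl⟩ := Submodule.mem_span_singleton.1 hx
    obtain ⟨d, rfl⟩ := Submodule.mem_span_singleton.1 hy
    have : ∑ i, (c • v) i * (d • w) i = c * d * ∑ i, v i * w i := by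
      rw [Finset.mul_sum]
      refine Finset.sum_congr rfl fun i _ => ?_
      simp only [Pi.smul_apply, smul_eq_mul]
      ring
    rw [this, h, mul_zero]

/-- Roots on distinct non-orthogonal lines have odd inner product. -/
lemma root_inner_odd {v w : Fin 8 → ℝ} (hv : v ∈ E7roots) (hw : w ∈ E7roots)
    (hne : ray8 v ≠ ray8 w) (hp : ¬ Perp8 (ray8 v) (ray8 w)) {n : ℤ}
    (hn : ∑ i, v i * w i = n) : Odd n := by
  have hv2 := (root_form hv).2
  have hw2 := (root_form hw).2
  rw [perp_iff, hn] at hp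
  have h0 : n ≠ 0 := by exact_mod_cast hp
  have key : ∀ s : ℝ, s * s = 1 → 0 < 4 - 2 * s * n := by
    intro s hs
    have e : ∑ i, (v i - s * w i) * (v i - s * w i) = 4 - 2 * s * n := by
      rw [← hn]
      simp only [Fin.sum_univ_eight] at *
      linear_combination hv2 + (s * s) * hw2 + 2 * hs
    rw [← e]
    refine lt_of_le_of_ne (Finset.sum_nonneg fun i _ => mul_self_nonneg _) fun h => hne ?_
    have h' := (Finset.sum_eq_zero_iff_of_nonneg (fun i _ => mul_self_nonneg _)).1 h.symm
    have hvw : v = s • w := by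
      funext i
      have := mul_self_eq_zero.1 (h' i (Finset.mem_univ i))
      simp only [Pi.smul_apply, smul_eq_mul]
      linarith
    have hs0 : s ≠ 0 := by
      rintro rfl
      simp at hs
    rw [hvw]
    exact Submodule.span_singleton_smul_eq (IsUnit.mk0 s hs0) w
  have k1 := key 1 (by norm_num)
  have k2 := key (-1) (by norm_num)
  have b1 : (n : ℝ) < 2 := by linarith
  have b2 : (-2 : ℝ) < n := by linarith
  have c1 : n < 2 := by exact_mod_cast b1
  have c2 : -2 < n := by exact_mod_cast b2
  have : n = 1 ∨ n = -1 := by omega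
  rcases this with rfl | rfl <;> decide

lemma no_eight (v : Fin 8 → Fin 8 → ℝ) (hv : ∀ j, v j ∈ E7roots)
    (hne : ∀ j k, j ≠ k → ray8 (v j) ≠ ray8 (v k))
    (hp : ∀ j k, j ≠ k → ¬ Perp8 (ray8 (v j)) (ray8 (v k))) : False := by
  choose G hG using fun j k => root_inner_int (hv j) (hv k)
  let A : Matrix (Fin 8) (Fin 8) ℝ := Matrix.of v
  let M : Matrix (Fin 8) (Fin 8) ℤ := Matrix.of G
  have hA : A.det = 0 := by
    refine Matrix.exists_mulVec_eq_zero_iff.1 ⟨fun _ => 1, ?_, ?_⟩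
    · intro h
      simpa using congrFun h 0
    · funext j
      simpa [A, Matrix.mulVec, dotProduct] using root_sum (hv j)
  have hM : A * A.transpose = M.map (Int.castRingHom ℝ) := by
    ext j k
    simp [A, M, Matrix.mul_apply, hG]
  have hdet : M.det = 0 := by
    have h1 : (Int.castRingHom ℝ) M.det = 0 := by
      rw [RingHom.map_det, RingHom.mapMatrix_apply, ← hM, Matrix.det_mul, hA, zero_mul]
    simpa using h1
  have h2 : M.map (Int.castRingHom (ZMod 2)) =
      Matrix.of (fun j k : Fin 8 => if j = k then (0 : ZMod 2) else 1) := by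
    ext j k
    by_cases h : j = k
    · subst h
      have : (G j j : ℝ) = 2 := by rw [← hG, (root_form (hv j)).2]
      have : G j j = 2 := by exact_mod_cast this
      simp only [M, Matrix.map_apply, Matrix.of_apply, this, if_true]
      decide
    · have := root_inner_odd (hv j) (hv k) (hne j k h) (hp j k h) (hG j k)
      simp only [M, Matrix.map_apply, Matrix.of_apply, h, if_false]
      exact (ZMod.intCast_eq_one_iff_odd).2 this
  have h3 : (Matrix.of (fun j k : Fin 8 => if j = k then (0 : ZMod 2) else 1)).det = 0 := by
    rw [← h2, ← RingHom.mapMatrix_apply, ← RingHom.map_det, hdet, map_zero]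
  have h4 : (Matrix.of (fun j k : Fin 8 => if j = k then (0 : ZMod 2) else 1)) *
      (Matrix.of (fun j k : Fin 8 => if j = k then (0 : ZMod 2) else 1)) = 1 := by
    ext j k
    rw [Matrix.mul_apply, Matrix.one_apply]
    revert j k
    simp only [Matrix.of_apply]
    decide
  have h5 := congrArg Matrix.det h4
  rw [Matrix.det_mul, h3, Matrix.det_one] at h5
  revert h5
  decide

/-- The seven roots `e₀ - e_{j+1}`. -/
def sevenRoot (j : Fin 7) : Fin 8 → ℝ :=
  ![1, -1, 0, 0, 0, 0, 0, 0] ∘ (Equiv.swap 1 j.succ : Equiv.Perm (Fin 8))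

lemma sevenRoot_apply (j : Fin 7) (i : Fin 8) :
    sevenRoot j i = if i = 0 then 1 else if i = j.succ then -1 else 0 := by
  fin_cases j <;> fin_cases i <;> simp [sevenRoot, Equiv.swap_apply_def]

lemma sevenRoot_zero (j : Fin 7) : sevenRoot j 0 = 1 := by simp [sevenRoot_apply]

lemma sevenRoot_succ (j k : Fin 7) : sevenRoot j k.succ = if k = j then -1 else 0 := by
  simp [sevenRoot_apply, Fin.succ_ne_zero]

lemma sevenRoot_inj : Function.Injective fun j => ray8 (sevenRoot j) := by
  intro j k h
  have hm : sevenRoot j ∈ ray8 (sevenRoot k) := by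
    have h' : ray8 (sevenRoot j) = ray8 (sevenRoot k) := h
    rw [← h']
    exact Submodule.mem_span_singleton_self _
  obtain ⟨c, hc⟩ := Submodule.mem_span_singleton.1 hm
  have h1 := congrFun hc j.succ
  by_contra hjk
  simp [sevenRoot_succ, hjk] at h1

/-- in the `E7` configuration there exist 7-tuples of mutually
non-orthogonal lines, but no 8-tuples of mutually non-orthogonal lines. -/
theorem stmt_9 :
    (∃ S : Set (Submodule ℝ (Fin 8 → ℝ)), S ⊆ E7lines ∧ S.ncard = 7 ∧
        S.Pairwise fun L M => ¬ Perp8 L M) ∧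
    ¬ ∃ S : Set (Submodule ℝ (Fin 8 → ℝ)), S ⊆ E7lines ∧ S.ncard = 8 ∧
        S.Pairwise fun L M => ¬ Perp8 L M := by
  constructor
  · refine ⟨Set.range fun j => ray8 (sevenRoot j), ?_, ?_, ?_⟩
    · rintro _ ⟨j, rfl⟩
      exact ⟨sevenRoot j, ⟨_, Or.inl rfl⟩, rfl⟩
    · rw [← Set.image_univ, Set.ncard_image_of_injective _ sevenRoot_inj, Set.ncard_univ]
      simp
    · rintro _ ⟨j, rfl⟩ _ ⟨k, rfl⟩ hne
      have hjk : j ≠ k := fun h => hne (by rw [h])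
      simp only [perp_iff]
      rw [Fin.sum_univ_succ]
      simp only [sevenRoot_zero, sevenRoot_succ]
      rw [Finset.sum_eq_zero]
      · norm_num
      · intro i _
        by_cases h : i = j
        · subst h
          simp [hjk]
        · simp [h]
  · rintro ⟨S, hS, hc, hp⟩
    have hfin : S.Finite := Set.finite_of_ncard_pos (by omega)
    have : Finite S := hfin
    have e : Fin 8 ≃ S := (Finite.equivFinOfCardEq (by simpa using hc)).symm
    choose v hv hr using fun j => hS (e j).2
    have hne : ∀ j k, j ≠ k → (e j : Submodule ℝ (Fin 8 → ℝ)) ≠ e k := fun j k h h' =>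
      h (e.injective (Subtype.ext h'))
    refine no_eight v hv (fun j k h => ?_) (fun j k h => ?_)
    · rw [hr, hr]
      exact hne j k h
    · rw [hr, hr]
      exact hp (e j).2 (e k).2 (hne j k h)
end
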